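/- Let P_{X,Y} be a pmf on a finite set 𝒳×𝒴 and let P_{X̃,Ỹ} = P_{X̃₀X̃₁,Ỹ₀Ỹ₁} be a pmf on a finite set (𝒳₀×𝒳₁)×(𝒴₀×𝒴₁). Suppose that Σ P_{X̃₁,Ỹ₁}(x,y) ≥ 1 − δ, where the sum ranges over all (x,y) such that the conditional distribution P_{X̃₀,Ỹ₀ | X̃₁=x, Ỹ₁=y} equals P_{X,Y} up to a bijective relabeling of the alphabets. Then Δ_{P_{X̃,Ỹ}} ≥ (1 − δ)·Δ_{P_{X,Y}}. -/

import Mathlib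

open scoped BigOperators
open Matrix
open scoped ComplexOrder

attribute [local instance 10] Classical.propDecidable

noncomputable section

/-- Base-2 Shannon entropy of a finitely supported real function. -/
def shannonEntropy {α : Type*} [Fintype α] (p : α → ℝ) : ℝ :=
  -∑ x, p x * Real.logb 2 (p x)

/-- Von Neumann entropy: base-2 Shannon entropy of the eigenvalue multiset. -/
def vonNeumannEntropy {n : Type*} [Fintype n] [DecidableEq n] (ρ : Matrix n n ℂ) : ℝ :=
  if h : ρ.IsHermitian then shannonEntropy h.eigenvalues else 0

/-- Rank-one outer product `|φ⟩⟨φ|`. -/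
def outer {n : Type*} (φ : n → ℂ) : Matrix n n ℂ :=
  fun i j => φ i * (starRingEnd ℂ) (φ j)

/-- Partial trace over the first tensor factor. -/
def trLeft {m n : Type*} [Fintype m] (ρ : Matrix (m × n) (m × n) ℂ) : Matrix n n ℂ :=
  fun i j => ∑ a, ρ (a, i) (a, j)

section primitives

variable {𝒰 𝒱 : Type*} [Fintype 𝒰] [Fintype 𝒱] [DecidableEq 𝒰] [DecidableEq 𝒱]

def margX (Q : 𝒰 × 𝒱 → ℝ) (u : 𝒰) : ℝ := ∑ v, Q (u, v)

def margY (Q : 𝒰 × 𝒱 → ℝ) (v : 𝒱) : ℝ := ∑ u, Q (u, v)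

/-- Classical base-2 mutual information `I(U;V) = H(U) + H(V) − H(U,V)`. -/
def mutualInfo (Q : 𝒰 × 𝒱 → ℝ) : ℝ :=
  shannonEntropy (margX Q) + shannonEntropy (margY Q) - shannonEntropy Q

/-- The regular embedding `|ψ_θ⟩ = Σ_{u,v} e^{iθ(u,v)} √Q(u,v) |u⟩⊗|v⟩` of `Q`. -/
def regEmbed (Q : 𝒰 × 𝒱 → ℝ) (θ : 𝒰 × 𝒱 → ℝ) : 𝒰 × 𝒱 → ℂ :=
  fun p => Complex.exp ((θ p : ℂ) * Complex.I) * (Real.sqrt (Q p) : ℂ)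

/-- The leakage `Δ(ψ_θ) = S(tr_first |ψ_θ⟩⟨ψ_θ|) − I(U;V)`. -/
def regLeakage (Q : 𝒰 × 𝒱 → ℝ) (θ : 𝒰 × 𝒱 → ℝ) : ℝ :=
  vonNeumannEntropy (trLeft (outer (regEmbed Q θ))) - mutualInfo Q

/-- The leakage of the primitive `Q`: minimal leakage over regular embeddings. -/
def primLeakage (Q : 𝒰 × 𝒱 → ℝ) : ℝ := ⨅ θ : 𝒰 × 𝒱 → ℝ, regLeakage Q θ

end primitives

/-! ### Subadditivity of the relative entropy of coherence -/

section analysis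

lemma hasDerivAt_mul_log_add {a l m s : ℝ} (hl : 0 ≤ l) (hm : a ≠ 0 → 0 < m) (hs : 0 ≤ s) :
    HasDerivAt (fun t => a * Real.log (m + t * l)) (a * (l / (m + s * l))) s := by
  rcases eq_or_ne a 0 with rfl | ha
  · simpa using hasDerivAt_const s (0 : ℝ)
  have hpos : m + s * l ≠ 0 := (add_pos_of_pos_of_nonneg (hm ha) (mul_nonneg hs hl)).ne'
  have h1 : HasDerivAt (fun t : ℝ => m + t * l) l s := by
    simpa using ((hasDerivAt_id s).mul_const l).const_add m
  exact (h1.log hpos).const_mul a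

lemma tendsto_mul_log_add_sub {a l m : ℝ} (hl : a ≠ 0 → 0 < l) :
    Filter.Tendsto (fun t => a * (Real.log (m + t * l) - Real.log t - Real.log m)) Filter.atTop
      (nhds (a * (Real.log l - Real.log m))) := by
  rcases eq_or_ne a 0 with rfl | ha
  · simp
  have hl' := hl ha
  refine Filter.Tendsto.const_mul a (Filter.Tendsto.sub_const ?_ _)
  have h1 : Filter.Tendsto (fun t : ℝ => Real.log (m / t + l)) Filter.atTop
      (nhds (Real.log l)) := by
    have h2 : Filter.Tendsto (fun t : ℝ => m / t + l) Filter.atTop (nhds (0 + l)) :=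
      (tendsto_const_nhds.div_atTop Filter.tendsto_id).add_const l
    rw [zero_add] at h2
    exact h2.log hl'.ne'
  refine h1.congr' ?_
  have h3 : ∀ᶠ t : ℝ in Filter.atTop, -l < m / t :=
    (tendsto_const_nhds.div_atTop Filter.tendsto_id).eventually_const_lt (by linarith)
  filter_upwards [Filter.eventually_gt_atTop 0, h3] with t ht h4
  have h5 : m / t + l ≠ 0 := by linarith
  rw [← Real.log_div _ ht.ne']
  · congr 1
    field_simp
  · intro h6
    apply h5
    field_simp
    linarith

/-- An inequality between rational functions of `s` integrates to one between logarithms. -/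
lemma sum_mul_log_sub_log_le {ι n : Type*} [Fintype ι] [Fintype n]
    (a l : ι → n → ℝ) (m : ι → ℝ) (b k : n → ℝ) (q : ℝ)
    (hl : ∀ x j, 0 ≤ l x j) (hk : ∀ j, 0 ≤ k j)
    (hal : ∀ x j, a x j ≠ 0 → 0 < l x j) (hbk : ∀ j, b j ≠ 0 → 0 < k j)
    (ham : ∀ x j, a x j ≠ 0 → 0 < m x) (hbq : ∀ j, b j ≠ 0 → 0 < q)
    (hsum : ∑ j, b j = ∑ x, ∑ j, a x j)
    (hG : ∀ s, 0 < s → ∑ j, b j * (k j / (q + s * k j))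
      ≤ ∑ x, ∑ j, a x j * (l x j / (m x + s * l x j))) :
    ∑ j, b j * (Real.log (k j) - Real.log q)
      ≤ ∑ x, ∑ j, a x j * (Real.log (l x j) - Real.log (m x)) := by
  set φ : ℝ → ℝ := fun t => ∑ x, ∑ j, a x j * Real.log (m x + t * l x j)
    - ∑ j, b j * Real.log (q + t * k j) with hφ
  have hderiv : ∀ s, 0 ≤ s → HasDerivAt φ (∑ x, ∑ j, a x j * (l x j / (m x + s * l x j))
      - ∑ j, b j * (k j / (q + s * k j))) s := fun s hs =>
    (HasDerivAt.fun_sum fun x _ => HasDerivAt.fun_sum fun j _ =>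
      hasDerivAt_mul_log_add (hl x j) (ham x j) hs).sub
    (HasDerivAt.fun_sum fun j _ => hasDerivAt_mul_log_add (hk j) (hbq j) hs)
  have hmono : MonotoneOn φ (Set.Ici 0) := by
    refine monotoneOn_of_deriv_nonneg (convex_Ici 0)
      (fun s hs => (hderiv s hs).continuousAt.continuousWithinAt) ?_ ?_
    · intro s hs
      rw [interior_Ici] at hs
      exact (hderiv s hs.le).differentiableAt.differentiableWithinAt
    · intro s hs
      rw [interior_Ici] at hs
      rw [(hderiv s hs.le).deriv]
      exact sub_nonneg.2 (hG s hs)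
  have hlim : Filter.Tendsto (fun t =>
      ∑ x, ∑ j, a x j * (Real.log (m x + t * l x j) - Real.log t - Real.log (m x))
      - ∑ j, b j * (Real.log (q + t * k j) - Real.log t - Real.log q)) Filter.atTop
      (nhds (∑ x, ∑ j, a x j * (Real.log (l x j) - Real.log (m x))
        - ∑ j, b j * (Real.log (k j) - Real.log q))) :=
    (tendsto_finsetSum _ fun x _ => tendsto_finsetSum _ fun j _ =>
      tendsto_mul_log_add_sub (hal x j)).sub
    (tendsto_finsetSum _ fun j _ => tendsto_mul_log_add_sub (hbk j))
  refine sub_nonneg.1 (ge_of_tendsto hlim ?_)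
  filter_upwards [Filter.eventually_ge_atTop 0] with t ht
  have h0 := hmono (Set.mem_Ici.2 le_rfl) (Set.mem_Ici.2 ht) ht
  simp only [hφ, zero_mul, add_zero] at h0
  simp only [mul_sub, Finset.sum_sub_distrib, ← Finset.sum_mul] at h0 ⊢
  rw [hsum] at h0 ⊢
  linarith

end analysis

section entropy

lemma shannonEntropy_eq {α : Type*} [Fintype α] (p : α → ℝ) :
    shannonEntropy p = (∑ x, Real.negMulLog (p x)) / Real.log 2 := by
  simp only [shannonEntropy, Real.logb, Real.negMulLog, Finset.sum_div, ← Finset.sum_neg_distrib]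
  exact Finset.sum_congr rfl fun _ _ => by ring

variable {m n : Type*} [Fintype m] [DecidableEq m] [Fintype n] [DecidableEq n]

lemma vonNeumannEntropy_eq_sum_roots {ρ : Matrix n n ℂ} (h : ρ.IsHermitian) :
    vonNeumannEntropy ρ
      = (ρ.charpoly.roots.map fun z => Real.negMulLog z.re).sum / Real.log 2 := by
  rw [vonNeumannEntropy, dif_pos h, shannonEntropy_eq, h.roots_charpoly_eq_eigenvalues,
    Multiset.map_map]
  rfl

lemma vonNeumannEntropy_mul_comm {A : Matrix m n ℂ} {B : Matrix n m ℂ}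
    (h : (A * B).IsHermitian) (h' : (B * A).IsHermitian) :
    vonNeumannEntropy (A * B) = vonNeumannEntropy (B * A) := by
  have hne : ∀ (k : ℕ) {p : Polynomial ℂ}, p.Monic → Polynomial.X ^ k * p ≠ 0 := fun k _ hp =>
    mul_ne_zero (pow_ne_zero _ Polynomial.X_ne_zero) hp.ne_zero
  have key := congrArg (fun p : Polynomial ℂ =>
    (p.roots.map fun z => Real.negMulLog z.re).sum) (Matrix.charpoly_mul_comm' A B)
  simp only [Polynomial.roots_mul (hne _ (Matrix.charpoly_monic _)), Polynomial.roots_X_pow, Multiset.map_add,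
    Multiset.sum_add, Multiset.map_nsmul, Multiset.sum_nsmul, Multiset.map_singleton,
    Multiset.sum_singleton, Complex.zero_re, Real.negMulLog_zero, smul_zero, zero_add] at key
  rw [vonNeumannEntropy_eq_sum_roots h, vonNeumannEntropy_eq_sum_roots h', key]

lemma vonNeumannEntropy_transpose {ρ : Matrix n n ℂ} (h : ρ.IsHermitian) :
    vonNeumannEntropy ρᵀ = vonNeumannEntropy ρ := by
  rw [vonNeumannEntropy_eq_sum_roots h, vonNeumannEntropy_eq_sum_roots h.transpose,
    Matrix.charpoly_transpose]

omit [Fintype n] in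
lemma isHermitian_diagonal_ofReal (d : n → ℝ) :
    (Matrix.diagonal fun i => (d i : ℂ)).IsHermitian :=
  Matrix.isHermitian_diagonal_of_self_adjoint _ (by ext; simp)

lemma vonNeumannEntropy_diagonal (d : n → ℝ) :
    vonNeumannEntropy (Matrix.diagonal fun i => (d i : ℂ)) = shannonEntropy d := by
  rw [vonNeumannEntropy_eq_sum_roots (isHermitian_diagonal_ofReal d), Matrix.charpoly_diagonal,
    Polynomial.roots_prod _ _ (Finset.prod_ne_zero_iff.2 fun _ _ => Polynomial.X_sub_C_ne_zero _),
    shannonEntropy_eq]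
  simp [Multiset.bind_singleton]

/-- The entropy of `W D W†` for an isometry `W` and a real diagonal matrix `D`. -/
lemma vonNeumannEntropy_isometry_conj (W : Matrix m n ℂ) (hW : Wᴴ * W = 1) (d : n → ℝ) :
    vonNeumannEntropy (W * Matrix.diagonal (fun i => (d i : ℂ)) * Wᴴ) = shannonEntropy d := by
  have h1 : (Matrix.diagonal fun i => (d i : ℂ)) * Wᴴ * W = Matrix.diagonal fun i => (d i : ℂ) := by
    rw [Matrix.mul_assoc, hW, Matrix.mul_one]
  have h2 : (W * ((Matrix.diagonal fun i => (d i : ℂ)) * Wᴴ)).IsHermitian := by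
    rw [← Matrix.mul_assoc]
    exact Matrix.isHermitian_mul_mul_conjTranspose _ (isHermitian_diagonal_ofReal d)
  rw [Matrix.mul_assoc, vonNeumannEntropy_mul_comm h2 (by rw [h1]; exact isHermitian_diagonal_ofReal d), h1,
    vonNeumannEntropy_diagonal]

end entropy

section coherence

variable {n : Type*} [Fintype n] [DecidableEq n]

/-- The coordinates of `x` in the eigenbasis of the Hermitian matrix `ρ`. -/
def eigenCoord {ρ : Matrix n n ℂ} (h : ρ.IsHermitian) (x : n → ℂ) : n → ℂ :=
  (h.eigenvectorUnitary : Matrix n n ℂ)ᴴ *ᵥ x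

lemma spectral_decomp {ρ : Matrix n n ℂ} (h : ρ.IsHermitian) :
    ρ = (h.eigenvectorUnitary : Matrix n n ℂ) * Matrix.diagonal (fun i => (h.eigenvalues i : ℂ))
      * (h.eigenvectorUnitary : Matrix n n ℂ)ᴴ := by
  conv_lhs => rw [h.spectral_theorem, Unitary.conjStarAlgAut_apply]
  rfl

lemma eigenvectorUnitary_mul_conjTranspose {ρ : Matrix n n ℂ} (h : ρ.IsHermitian) :
    (h.eigenvectorUnitary : Matrix n n ℂ) * (h.eigenvectorUnitary : Matrix n n ℂ)ᴴ = 1 :=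
  Unitary.coe_mul_star_self h.eigenvectorUnitary

lemma conjTranspose_mul_eigenvectorUnitary {ρ : Matrix n n ℂ} (h : ρ.IsHermitian) :
    (h.eigenvectorUnitary : Matrix n n ℂ)ᴴ * (h.eigenvectorUnitary : Matrix n n ℂ) = 1 :=
  Unitary.coe_star_mul_self h.eigenvectorUnitary

lemma dotProduct_mulVec_eq_sum {ρ : Matrix n n ℂ} (h : ρ.IsHermitian) (x z : n → ℂ) :
    star x ⬝ᵥ ρ *ᵥ z = ∑ j, h.eigenvalues j * (star (eigenCoord h x j) * eigenCoord h z j) := by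
  conv_lhs => rw [spectral_decomp h]
  rw [← Matrix.mulVec_mulVec, ← Matrix.mulVec_mulVec, Matrix.dotProduct_mulVec,
    ← Matrix.conjTranspose_conjTranspose (h.eigenvectorUnitary : Matrix n n ℂ),
    ← Matrix.star_mulVec, Matrix.conjTranspose_conjTranspose]
  simp only [dotProduct, Matrix.mulVec_diagonal, eigenCoord, Pi.star_apply]
  exact Finset.sum_congr rfl fun _ _ => by ring

lemma dotProduct_eq_sum {ρ : Matrix n n ℂ} (h : ρ.IsHermitian) (x z : n → ℂ) :
    star x ⬝ᵥ z = ∑ j, star (eigenCoord h x j) * eigenCoord h z j := by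
  have h1 : star (eigenCoord h x) ⬝ᵥ eigenCoord h z = star x ⬝ᵥ z := by
    rw [eigenCoord, eigenCoord, Matrix.star_mulVec, ← Matrix.dotProduct_mulVec,
      Matrix.mulVec_mulVec, Matrix.conjTranspose_conjTranspose,
      eigenvectorUnitary_mul_conjTranspose, Matrix.one_mulVec]
  rw [← h1]
  rfl

/-- The weight of the `j`-th eigenvector on the `k`-th basis vector. -/
def eigenWeight {ρ : Matrix n n ℂ} (h : ρ.IsHermitian) (k j : n) : ℝ :=
  Complex.normSq (eigenCoord h (Pi.single k 1) j)

lemma eigenWeight_nonneg {ρ : Matrix n n ℂ} (h : ρ.IsHermitian) (k j : n) :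
    0 ≤ eigenWeight h k j := Complex.normSq_nonneg _

lemma star_mul_self_eq_normSq (z : ℂ) : star z * z = (Complex.normSq z : ℂ) :=
  (Complex.normSq_eq_conj_mul_self).symm

lemma diag_eq_sum_eigenWeight {ρ : Matrix n n ℂ} (h : ρ.IsHermitian) (k : n) :
    (ρ k k).re = ∑ j, eigenWeight h k j * h.eigenvalues j := by
  have h1 : ρ k k = star (Pi.single k (1 : ℂ)) ⬝ᵥ ρ *ᵥ Pi.single k 1 := by
    simp
  rw [h1, dotProduct_mulVec_eq_sum h, Complex.re_sum]
  refine Finset.sum_congr rfl fun j _ => ?_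
  rw [star_mul_self_eq_normSq, ← Complex.ofReal_mul, Complex.ofReal_re, eigenWeight, mul_comm]

lemma sum_eigenWeight {ρ : Matrix n n ℂ} (h : ρ.IsHermitian) (j : n) :
    ∑ k, eigenWeight h k j = 1 := by
  have h1 := congrFun (congrFun (conjTranspose_mul_eigenvectorUnitary h) j) j
  rw [Matrix.mul_apply, Matrix.one_apply_eq] at h1
  apply Complex.ofReal_injective
  rw [Complex.ofReal_one, ← h1, Complex.ofReal_sum]
  refine Finset.sum_congr rfl fun k _ => ?_
  rw [eigenWeight, eigenCoord, Matrix.mulVec_single_one, ← star_mul_self_eq_normSq,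
    Matrix.col_apply, Matrix.conjTranspose_apply, star_star, mul_comm]

/-- A functional, linear in `ρ`, whose supremum over `x` is
`⟨k|ρ (ρ_{kk} + s ρ)⁻¹ ρ|k⟩`. -/
def resolventForm (ρ : Matrix n n ℂ) (k : n) (s : ℝ) (x : n → ℂ) : ℝ :=
  2 * (star x ⬝ᵥ ρ *ᵥ Pi.single k 1).re - (ρ k k).re * (star x ⬝ᵥ x).re
    - s * (star x ⬝ᵥ ρ *ᵥ x).re

lemma resolventForm_sum {ι : Type*} [Fintype ι] (ρ : ι → Matrix n n ℂ) (k : n) (s : ℝ)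
    (x : n → ℂ) : resolventForm (∑ i, ρ i) k s x = ∑ i, resolventForm (ρ i) k s x := by
  simp only [resolventForm, Matrix.sum_mulVec, dotProduct_sum, Complex.re_sum, Matrix.sum_apply,
    Finset.sum_sub_distrib, Finset.mul_sum, Finset.sum_mul]

lemma resolventForm_eq_sum {ρ : Matrix n n ℂ} (h : ρ.IsHermitian) (k : n) (s : ℝ) (x : n → ℂ) :
    resolventForm ρ k s x = ∑ j,
      (2 * h.eigenvalues j * (star (eigenCoord h x j) * eigenCoord h (Pi.single k 1) j).re
        - ((ρ k k).re + s * h.eigenvalues j) * Complex.normSq (eigenCoord h x j)) := by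
  rw [resolventForm, dotProduct_mulVec_eq_sum h, dotProduct_mulVec_eq_sum h, dotProduct_eq_sum h]
  simp only [star_mul_self_eq_normSq, ← Complex.ofReal_mul, Complex.re_sum, Complex.ofReal_re,
    Complex.re_ofReal_mul, Finset.mul_sum, ← Finset.sum_sub_distrib]
  exact Finset.sum_congr rfl fun _ _ => by ring

lemma two_mul_re_sub_le {l r : ℝ} (hr : 0 ≤ r) (hlr : r = 0 → l = 0) (y c : ℂ) :
    2 * l * (star y * c).re - r * Complex.normSq y ≤ Complex.normSq c * l * (l / r) := by
  rcases eq_or_ne r 0 with h0 | h0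
  · simp [h0, hlr h0]
  have hr' : 0 < r := lt_of_le_of_ne hr h0.symm
  have h1 : Complex.normSq c * l * (l / r) - (2 * l * (star y * c).re - r * Complex.normSq y)
      = ((r * y.re - l * c.re) ^ 2 + (r * y.im - l * c.im) ^ 2) / r := by
    field_simp
    simp [Complex.normSq_apply]
    ring
  have h2 : 0 ≤ ((r * y.re - l * c.re) ^ 2 + (r * y.im - l * c.im) ^ 2) / r := by positivity
  linarith

lemma diag_re_nonneg {ρ : Matrix n n ℂ} (h : ρ.PosSemidef) (k : n) : 0 ≤ (ρ k k).re := by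
  rw [diag_eq_sum_eigenWeight h.isHermitian]
  exact Finset.sum_nonneg fun j _ => mul_nonneg (eigenWeight_nonneg _ _ _) (h.eigenvalues_nonneg j)

lemma resolventForm_le {ρ : Matrix n n ℂ} (h : ρ.PosSemidef) (k : n) {s : ℝ} (hs : 0 < s)
    (x : n → ℂ) :
    resolventForm ρ k s x ≤ ∑ j, eigenWeight h.isHermitian k j * h.isHermitian.eigenvalues j
      * (h.isHermitian.eigenvalues j / ((ρ k k).re + s * h.isHermitian.eigenvalues j)) := by
  rw [resolventForm_eq_sum h.isHermitian]
  refine Finset.sum_le_sum fun j _ => ?_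
  have h1 := diag_re_nonneg h k
  have h2 := h.eigenvalues_nonneg j
  refine two_mul_re_sub_le (by positivity) (fun h3 => ?_) _ _
  have h4 : s * h.isHermitian.eigenvalues j = 0 := by nlinarith [mul_nonneg hs.le h2]
  exact (mul_eq_zero.1 h4).resolve_left hs.ne'

lemma exists_resolventForm_eq {ρ : Matrix n n ℂ} (h : ρ.PosSemidef) (k : n) (s : ℝ) :
    ∃ x, resolventForm ρ k s x = ∑ j, eigenWeight h.isHermitian k j * h.isHermitian.eigenvalues j
      * (h.isHermitian.eigenvalues j / ((ρ k k).re + s * h.isHermitian.eigenvalues j)) := by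
  set l := h.isHermitian.eigenvalues with hl
  set c := eigenCoord h.isHermitian (Pi.single k 1) with hc
  refine ⟨(h.isHermitian.eigenvectorUnitary : Matrix n n ℂ) *ᵥ
    fun j => ((l j / ((ρ k k).re + s * l j) : ℝ) : ℂ) * c j, ?_⟩
  rw [resolventForm_eq_sum h.isHermitian]
  refine Finset.sum_congr rfl fun j _ => ?_
  conv_lhs => rw [eigenCoord, Matrix.mulVec_mulVec, conjTranspose_mul_eigenvectorUnitary,
    Matrix.one_mulVec]
  rw [← hl, ← hc, eigenWeight, ← hc, star_mul', mul_assoc (star _) (star (c j)) (c j), star_mul_self_eq_normSq,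
    Complex.normSq_mul, Complex.normSq_ofReal]
  simp only [Complex.star_def, Complex.conj_ofReal, ← Complex.ofReal_mul, Complex.ofReal_re]
  rcases eq_or_ne ((ρ k k).re + s * l j) 0 with h0 | h0
  · simp [h0]
  · field_simp
    ring

/-- Subadditivity of `ρ ↦ ⟨k|ρ log ρ|k⟩ - ρ_{kk} log ρ_{kk}`. -/
lemma sum_eigenWeight_log_le {ι : Type*} [Fintype ι] {ρ : Matrix n n ℂ} {σ : ι → Matrix n n ℂ}
    (hσ : ∀ i, (σ i).PosSemidef) (hρ : ρ.PosSemidef) (hsum : ρ = ∑ i, σ i) (k : n) :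
    ∑ j, eigenWeight hρ.isHermitian k j * hρ.isHermitian.eigenvalues j
        * (Real.log (hρ.isHermitian.eigenvalues j) - Real.log (ρ k k).re)
      ≤ ∑ i, ∑ j, eigenWeight (hσ i).isHermitian k j * (hσ i).isHermitian.eigenvalues j
        * (Real.log ((hσ i).isHermitian.eigenvalues j) - Real.log (σ i k k).re) := by
  have hpos : ∀ {τ : Matrix n n ℂ} (hτ : τ.PosSemidef) (j : n),
      eigenWeight hτ.isHermitian k j * hτ.isHermitian.eigenvalues j ≠ 0 →
      0 < hτ.isHermitian.eigenvalues j ∧ 0 < (τ k k).re := by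
    intro τ hτ j hj
    have hnn : ∀ i, 0 ≤ eigenWeight hτ.isHermitian k i * hτ.isHermitian.eigenvalues i := fun i =>
      mul_nonneg (eigenWeight_nonneg _ _ _) (hτ.eigenvalues_nonneg i)
    refine ⟨lt_of_le_of_ne (hτ.eigenvalues_nonneg j) (right_ne_zero_of_mul hj).symm, ?_⟩
    rw [diag_eq_sum_eigenWeight hτ.isHermitian]
    exact Finset.sum_pos' (fun i _ => hnn i) ⟨j, Finset.mem_univ _, lt_of_le_of_ne (hnn j) hj.symm⟩
  refine sum_mul_log_sub_log_le
    (fun i j => eigenWeight (hσ i).isHermitian k j * (hσ i).isHermitian.eigenvalues j)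
    (fun i => (hσ i).isHermitian.eigenvalues) (fun i => (σ i k k).re) _ _ _
    (fun i j => (hσ i).eigenvalues_nonneg j) hρ.eigenvalues_nonneg
    (fun i j hj => (hpos (hσ i) j hj).1) (fun j hj => (hpos hρ j hj).1)
    (fun i j hj => (hpos (hσ i) j hj).2) (fun j hj => (hpos hρ j hj).2) ?_ ?_
  · simp only [← diag_eq_sum_eigenWeight]
    rw [hsum, Matrix.sum_apply, Complex.re_sum]
  · intro s hs
    obtain ⟨x, hx⟩ := exists_resolventForm_eq hρ k s
    rw [← hx, hsum, resolventForm_sum]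
    exact Finset.sum_le_sum fun i _ => resolventForm_le (hσ i) k hs x

lemma shannonEntropy_diag_sub_vonNeumannEntropy {ρ : Matrix n n ℂ} (h : ρ.IsHermitian) :
    shannonEntropy (fun k => (ρ k k).re) - vonNeumannEntropy ρ
      = (∑ k, ∑ j, eigenWeight h k j * h.eigenvalues j
        * (Real.log (h.eigenvalues j) - Real.log (ρ k k).re)) / Real.log 2 := by
  rw [vonNeumannEntropy, dif_pos h, shannonEntropy_eq, shannonEntropy_eq, ← sub_div]
  congr 1
  simp only [mul_sub, Finset.sum_sub_distrib, ← Finset.sum_mul, ← diag_eq_sum_eigenWeight]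
  rw [Finset.sum_comm]
  simp only [← Finset.sum_mul, sum_eigenWeight, one_mul, Real.negMulLog, neg_mul,
    Finset.sum_neg_distrib]
  ring

/-- The relative entropy of coherence `H(diag ρ) - S(ρ)` is subadditive. -/
theorem relative_entropy_of_coherence_sum_le {ι : Type*} [Fintype ι] {ρ : Matrix n n ℂ}
    {σ : ι → Matrix n n ℂ} (hσ : ∀ i, (σ i).PosSemidef) (hsum : ρ = ∑ i, σ i) :
    shannonEntropy (fun k => (ρ k k).re) - vonNeumannEntropy ρ
      ≤ ∑ i, (shannonEntropy (fun k => (σ i k k).re) - vonNeumannEntropy (σ i)) := by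
  have hρ : ρ.PosSemidef := hsum ▸ Matrix.posSemidef_sum _ fun i _ => hσ i
  simp only [shannonEntropy_diag_sub_vonNeumannEntropy hρ.isHermitian,
    fun i => shannonEntropy_diag_sub_vonNeumannEntropy (hσ i).isHermitian, ← Finset.sum_div]
  refine div_le_div_of_nonneg_right ?_ (Real.log_nonneg (by norm_num))
  rw [Finset.sum_comm (s := (Finset.univ : Finset ι))]
  exact Finset.sum_le_sum fun k _ => sum_eigenWeight_log_le hσ hρ hsum k

end coherence

section embeddings

variable {U V X Y : Type*} [Fintype U] [DecidableEq U] [Fintype V] [DecidableEq V]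
  [Fintype X] [DecidableEq X] [Fintype Y] [DecidableEq Y]

/-- The leakage of an arbitrary (unnormalized) bipartite pure state with respect to the
computational basis. -/
def leak (ψ : U × V → ℂ) : ℝ :=
  vonNeumannEntropy (trLeft (outer ψ)) - mutualInfo fun p => Complex.normSq (ψ p)

omit [DecidableEq U] [Fintype V] [DecidableEq V] in
lemma trLeft_outer_eq (ψ : U × V → ℂ) :
    trLeft (outer ψ) = (Matrix.of fun u v => ψ (u, v))ᵀ * ((Matrix.of fun u v => ψ (u, v))ᵀ)ᴴ := by
  ext i j
  simp [trLeft, outer, Matrix.mul_apply]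

omit [DecidableEq U] [DecidableEq V] in
lemma posSemidef_trLeft_outer (ψ : U × V → ℂ) : (trLeft (outer ψ)).PosSemidef := by
  rw [trLeft_outer_eq]
  exact Matrix.posSemidef_self_mul_conjTranspose _

omit [DecidableEq U] [Fintype V] [DecidableEq V] in
lemma trLeft_outer_diag (ψ : U × V → ℂ) (v : V) :
    trLeft (outer ψ) v v = (margY (fun p => Complex.normSq (ψ p)) v : ℂ) := by
  simp only [trLeft, outer, margY, Complex.ofReal_sum, Complex.mul_conj]

omit [DecidableEq U] [DecidableEq V] in
lemma mutualInfo_swap (Q : U × V → ℝ) : mutualInfo (fun p : V × U => Q p.swap) = mutualInfo Q := by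
  have h : shannonEntropy (fun p : V × U => Q p.swap) = shannonEntropy Q := by
    simp only [shannonEntropy]
    rw [← (Equiv.prodComm V U).sum_comp]
    rfl
  rw [mutualInfo, mutualInfo, h, add_comm (shannonEntropy (margX Q))]
  rfl

/-- The two reduced states of a bipartite pure state have the same entropy. -/
lemma vonNeumannEntropy_trLeft_outer_swap (ψ : U × V → ℂ) :
    vonNeumannEntropy (trLeft (outer fun p : V × U => ψ p.swap))
      = vonNeumannEntropy (trLeft (outer ψ)) := by
  set A : Matrix U V ℂ := Matrix.of fun u v => ψ (u, v) with hA
  have h1 : trLeft (outer fun p : V × U => ψ p.swap) = A * Aᴴ := trLeft_outer_eq _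
  have h2 : trLeft (outer ψ) = (Aᴴ * A)ᵀ := by
    rw [trLeft_outer_eq, Matrix.transpose_mul, ← hA]
    rfl
  rw [h1, h2, vonNeumannEntropy_transpose (Matrix.isHermitian_conjTranspose_mul_self A),
    vonNeumannEntropy_mul_comm (Matrix.isHermitian_mul_conjTranspose_self A)
      (Matrix.isHermitian_conjTranspose_mul_self A)]

lemma leak_swap (ψ : U × V → ℂ) : leak (fun p : V × U => ψ p.swap) = leak ψ := by
  rw [leak, leak, vonNeumannEntropy_trLeft_outer_swap,
    ← mutualInfo_swap fun p => Complex.normSq (ψ p)]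

lemma sum_negMulLog_ite {ι : Type*} [Fintype ι] (i : ι) (q : ℝ) :
    ∑ j, Real.negMulLog (if i = j then q else 0) = Real.negMulLog q := by
  rw [Finset.sum_eq_single i] <;> simp +contextual [eq_comm]

omit [DecidableEq U] in
/-- Measuring a function of the first system does not increase the leakage. -/
lemma sum_leak_restrict_fst_le {ι : Type*} [Fintype ι] (ψ : U × V → ℂ) (f : U → ι) :
    ∑ i, leak (fun p => if f p.1 = i then ψ p else 0) ≤ leak ψ := by
  have hsum : trLeft (outer ψ) = ∑ i, trLeft (outer fun p => if f p.1 = i then ψ p else 0) := by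
    ext v w
    simp only [Matrix.sum_apply, trLeft, outer]
    rw [Finset.sum_comm]
    refine Finset.sum_congr rfl fun u _ => ?_
    rw [Finset.sum_eq_single (f u)] <;> simp +contextual [eq_comm]
  have key := relative_entropy_of_coherence_sum_le
    (fun i => posSemidef_trLeft_outer fun p => if f p.1 = i then ψ p else 0) hsum
  simp only [trLeft_outer_diag, Complex.ofReal_re] at key
  have hns : ∀ i, (fun p : U × V => Complex.normSq (if f p.1 = i then ψ p else 0))
      = fun p => if f p.1 = i then Complex.normSq (ψ p) else 0 := fun i => by
    ext p
    split_ifs <;> simp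
  have hX : ∑ i, shannonEntropy
      (margX fun p : U × V => if f p.1 = i then Complex.normSq (ψ p) else 0)
      = shannonEntropy (margX fun p => Complex.normSq (ψ p)) := by
    have h : ∀ i u, margX (fun p : U × V => if f p.1 = i then Complex.normSq (ψ p) else 0) u
        = if f u = i then margX (fun p => Complex.normSq (ψ p)) u else 0 := fun i u => by
      simp only [margX]
      split_ifs <;> simp
    simp only [shannonEntropy_eq, h, ← Finset.sum_div]
    rw [Finset.sum_comm]
    simp only [sum_negMulLog_ite]
  have hXY : ∑ i, shannonEntropy (fun p : U × V => if f p.1 = i then Complex.normSq (ψ p) else 0)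
      = shannonEntropy fun p => Complex.normSq (ψ p) := by
    simp only [shannonEntropy_eq, ← Finset.sum_div]
    rw [Finset.sum_comm]
    simp only [sum_negMulLog_ite]
  simp only [hns, Finset.sum_sub_distrib] at key
  simp only [leak, mutualInfo, hns, Finset.sum_sub_distrib, Finset.sum_add_distrib]
  rw [hX, hXY]
  linarith

/-- Measuring a function of each of the two systems does not increase the leakage. -/
lemma sum_leak_restrict_le {ι κ : Type*} [Fintype ι] [Fintype κ] (ψ : U × V → ℂ) (f : U → ι)
    (g : V → κ) :
    ∑ q : ι × κ, leak (fun p => if f p.1 = q.1 ∧ g p.2 = q.2 then ψ p else 0) ≤ leak ψ := by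
  refine le_trans ?_ (sum_leak_restrict_fst_le ψ f)
  rw [Fintype.sum_prod_type]
  refine Finset.sum_le_sum fun i _ => ?_
  have h := sum_leak_restrict_fst_le (fun p : V × U => if f p.2 = i then ψ p.swap else 0) g
  rw [← leak_swap fun p : U × V => if f p.1 = i then ψ p else 0]
  refine le_trans (le_of_eq (Finset.sum_congr rfl fun j _ => ?_)) h
  rw [← leak_swap]
  congr 1
  ext p
  by_cases h1 : f p.2 = i <;> by_cases h2 : g p.1 = j <;> simp [h1, h2]

lemma leak_single (u : U) (v : V) (ψ : U × V → ℂ) :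
    leak (fun p => if p.1 = u ∧ p.2 = v then ψ p else 0) = 0 := by
  set Q : U × V → ℝ := fun p => if p.1 = u ∧ p.2 = v then Complex.normSq (ψ p) else 0 with hQ
  have hns : (fun p : U × V => Complex.normSq (if p.1 = u ∧ p.2 = v then ψ p else 0)) = Q := by
    ext p
    simp only [hQ]
    split_ifs <;> simp
  have hdiag : trLeft (outer fun p : U × V => if p.1 = u ∧ p.2 = v then ψ p else 0)
      = Matrix.diagonal fun i => (margY Q i : ℂ) := by
    ext i j
    rcases eq_or_ne i j with rfl | hij
    · rw [trLeft_outer_diag, hns, Matrix.diagonal_apply_eq]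
    · rw [Matrix.diagonal_apply_ne _ hij]
      refine Finset.sum_eq_zero fun a _ => ?_
      by_cases h1 : i = v
      · have h2 : j ≠ v := fun h2 => hij (h1.trans h2.symm)
        simp [outer, h2]
      · simp [outer, h1]
  have hX : shannonEntropy (margX Q) = shannonEntropy Q := by
    simp only [shannonEntropy_eq, margX, Fintype.sum_prod_type]
    congr 1
    refine Finset.sum_congr rfl fun a _ => ?_
    rw [Finset.sum_eq_single v, Finset.sum_eq_single v] <;> simp +contextual [hQ]
  rw [leak, hns, hdiag, vonNeumannEntropy_diagonal, mutualInfo, hX]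
  ring

lemma leak_nonneg (ψ : U × V → ℂ) : 0 ≤ leak ψ := by
  have h := sum_leak_restrict_le ψ id id
  simp only [id] at h
  refine le_of_eq_of_le (Finset.sum_eq_zero fun q _ => ?_).symm h
  convert leak_single q.1 q.2 ψ

lemma shannonEntropy_extend {α β : Type*} [Fintype α] [Fintype β] (e : α ↪ β) (c : ℝ)
    (p : α → ℝ) (q : β → ℝ) (hq : ∀ a, q (e a) = c * p a) (h0 : ∀ b, b ∉ Set.range e → q b = 0) :
    shannonEntropy q
      = c * shannonEntropy p + (∑ a, p a) * (Real.negMulLog c / Real.log 2) := by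
  rw [shannonEntropy_eq, shannonEntropy_eq, ← Fintype.sum_of_injective e e.injective
    (fun a => Real.negMulLog (c * p a)) _ (fun b hb => by rw [h0 b hb, Real.negMulLog_zero])
    (fun a => by rw [hq])]
  simp only [Real.negMulLog_mul, Finset.sum_add_distrib, ← Finset.sum_mul, ← Finset.mul_sum]
  ring

omit [DecidableEq X] in
/-- The leakage is positively homogeneous and invariant under enlarging the two systems. -/
lemma leak_extend (e : X ↪ U) (e' : Y ↪ V) {c : ℝ} (hc : 0 ≤ c) (φ : X × Y → ℂ) (ψ : U × V → ℂ)
    (hψ : ∀ a b, ψ (e a, e' b) = (Real.sqrt c : ℂ) * φ (a, b))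
    (h0 : ∀ u v, (u ∉ Set.range e ∨ v ∉ Set.range e') → ψ (u, v) = 0) :
    leak ψ = c * leak φ := by
  set Q : U × V → ℝ := fun p => Complex.normSq (ψ p) with hQ
  set R : X × Y → ℝ := fun p => Complex.normSq (φ p) with hR
  have hQR : ∀ a b, Q (e a, e' b) = c * R (a, b) := fun a b => by
    rw [hQ, hR]
    simp only [hψ, Complex.normSq_mul, Complex.normSq_ofReal, Real.mul_self_sqrt hc]
  have hQ0 : ∀ u v, (u ∉ Set.range e ∨ v ∉ Set.range e') → Q (u, v) = 0 := fun u v h => by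
    simp only [hQ, h0 u v h, map_zero]
  have hX := shannonEntropy_extend e c (margX R) (margX Q)
    (fun a => by
      rw [margX, margX, Finset.mul_sum]
      exact (Fintype.sum_of_injective e' e'.injective _ _ (fun v hv => hQ0 _ _ (Or.inr hv))
        fun b => (hQR a b).symm).symm)
    (fun u hu => Finset.sum_eq_zero fun v _ => hQ0 _ _ (Or.inl hu))
  have hY := shannonEntropy_extend e' c (margY R) (margY Q)
    (fun b => by
      rw [margY, margY, Finset.mul_sum]
      exact (Fintype.sum_of_injective e e.injective _ _ (fun v hv => hQ0 _ _ (Or.inl hv))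
        fun a => (hQR a b).symm).symm)
    (fun v hv => Finset.sum_eq_zero fun u _ => hQ0 _ _ (Or.inr hv))
  have hXY := shannonEntropy_extend (e.prodMap e') c R Q (fun p => hQR p.1 p.2)
    (fun p hp => hQ0 p.1 p.2 (by
      by_contra! h
      obtain ⟨⟨a, ha⟩, ⟨b, hb⟩⟩ := h
      exact hp ⟨(a, b), Prod.ext ha hb⟩))
  have hρ := posSemidef_trLeft_outer φ
  set d := hρ.isHermitian.eigenvalues with hd
  set W : Matrix V Y ℂ := (Matrix.of fun v b => if v = e' b then (1 : ℂ) else 0) with hW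
  have hWW : Wᴴ * W = 1 := by
    ext b b'
    simp [hW, Matrix.mul_apply, Matrix.one_apply, apply_ite, eq_comm]
  have htr : trLeft (outer ψ) = (W * (hρ.isHermitian.eigenvectorUnitary : Matrix Y Y ℂ))
      * Matrix.diagonal (fun i => ((c * d i : ℝ) : ℂ))
      * (W * (hρ.isHermitian.eigenvectorUnitary : Matrix Y Y ℂ))ᴴ := by
    have h1 : Matrix.diagonal (fun i => ((c * d i : ℝ) : ℂ))
        = (c : ℂ) • Matrix.diagonal (fun i => (d i : ℂ)) := by
      ext i j
      simp [Matrix.diagonal_apply]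
    have h2 : trLeft (outer ψ) = (c : ℂ) • (W * trLeft (outer φ) * Wᴴ) := by
      ext v w
      by_cases hv : v ∈ Set.range e'
      · by_cases hw : w ∈ Set.range e'
        · obtain ⟨b, rfl⟩ := hv
          obtain ⟨b', rfl⟩ := hw
          have h3 : (W * trLeft (outer φ) * Wᴴ) (e' b) (e' b') = trLeft (outer φ) b b' := by
            simp [hW, Matrix.mul_apply, apply_ite]
          rw [Matrix.smul_apply, h3, trLeft, trLeft, smul_eq_mul, Finset.mul_sum]
          refine (Fintype.sum_of_injective e e.injective _ _ (fun u hu => ?_) fun a => ?_).symm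
          · simp [outer, h0 u _ (Or.inl hu)]
          · simp only [outer, hψ, map_mul, Complex.conj_ofReal]
            have h4 : (c : ℂ) = (Real.sqrt c : ℂ) * (Real.sqrt c : ℂ) := by
              rw [← Complex.ofReal_mul, Real.mul_self_sqrt hc]
            rw [h4]
            ring
        · have h3 : ∀ b, w ≠ e' b := fun b hb => hw ⟨b, hb.symm⟩
          simp [trLeft, outer, h0 _ w (Or.inr hw), hW, Matrix.mul_apply, h3]
      · have h3 : ∀ b, v ≠ e' b := fun b hb => hv ⟨b, hb.symm⟩
        simp [trLeft, outer, h0 _ v (Or.inr hv), hW, Matrix.mul_apply, h3]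
    rw [h1, h2]
    conv_lhs => rw [spectral_decomp hρ.isHermitian]
    simp only [Matrix.conjTranspose_mul, Matrix.mul_assoc, Matrix.mul_smul, Matrix.smul_mul, hd]
  have hS : vonNeumannEntropy (trLeft (outer ψ)) = c * vonNeumannEntropy (trLeft (outer φ))
      + (∑ i, d i) * (Real.negMulLog c / Real.log 2) := by
    rw [htr, vonNeumannEntropy_isometry_conj]
    · rw [shannonEntropy_extend (Function.Embedding.refl Y) c d _ (fun _ => rfl)
        (fun b hb => absurd ⟨b, rfl⟩ hb), vonNeumannEntropy, dif_pos hρ.isHermitian]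
    · rw [Matrix.conjTranspose_mul, Matrix.mul_assoc, ← Matrix.mul_assoc Wᴴ, hWW, Matrix.one_mul,
        conjTranspose_mul_eigenvectorUnitary]
  have hdY : ∑ i, d i = ∑ b, margY R b := by
    apply Complex.ofReal_injective
    rw [Complex.ofReal_sum, Complex.ofReal_sum]
    refine (hρ.isHermitian.trace_eq_sum_eigenvalues).symm.trans ?_
    exact Finset.sum_congr rfl fun b _ => trLeft_outer_diag φ b
  have hYt : ∑ b, margY R b = ∑ p, R p := by
    simp only [margY, Fintype.sum_prod_type_right]
  have hXt : ∑ a, margX R a = ∑ p, R p := by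
    simp only [margX, Fintype.sum_prod_type]
  rw [leak, leak, ← hQ, ← hR, mutualInfo, mutualInfo, hX, hY, hXY, hS, hdY, hYt, hXt]
  ring

end embeddings

section regular

variable {U V : Type*} [Fintype U] [DecidableEq U] [Fintype V] [DecidableEq V]

omit [Fintype U] [DecidableEq U] [Fintype V] [DecidableEq V] in
lemma normSq_regEmbed {Q : U × V → ℝ} (hQ : ∀ p, 0 ≤ Q p) (θ : U × V → ℝ) (p : U × V) :
    Complex.normSq (regEmbed Q θ p) = Q p := by
  rw [regEmbed, Complex.normSq_mul, Complex.normSq_ofReal, Real.mul_self_sqrt (hQ p),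
    Complex.normSq_eq_norm_sq, Complex.norm_exp_ofReal_mul_I, one_pow, one_mul]

omit [DecidableEq U] in
lemma regLeakage_eq_leak {Q : U × V → ℝ} (hQ : ∀ p, 0 ≤ Q p) (θ : U × V → ℝ) :
    regLeakage Q θ = leak (regEmbed Q θ) := by
  simp only [regLeakage, leak, normSq_regEmbed hQ]

lemma primLeakage_le_leak {Q : U × V → ℝ} (hQ : ∀ p, 0 ≤ Q p) (θ : U × V → ℝ) :
    primLeakage Q ≤ leak (regEmbed Q θ) := by
  rw [← regLeakage_eq_leak hQ]
  refine ciInf_le ⟨0, ?_⟩ θ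
  rintro _ ⟨θ', rfl⟩
  exact (leak_nonneg _).trans_eq (regLeakage_eq_leak hQ θ').symm

lemma primLeakage_nonneg {Q : U × V → ℝ} (hQ : ∀ p, 0 ≤ Q p) : 0 ≤ primLeakage Q :=
  le_ciInf fun θ => (leak_nonneg _).trans_eq (regLeakage_eq_leak hQ θ).symm

end regular

/-- if with probability at least `1 − δ` (over `(X̃₁,Ỹ₁)`) the conditional
distribution `P_{X̃₀,Ỹ₀|X̃₁=x,Ỹ₁=y}` equals `P_{X,Y}` up to a bijective relabeling of
the alphabets, then `Δ_{P_{X̃,Ỹ}} ≥ (1 − δ)·Δ_{P_{X,Y}}`. -/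
theorem reduction_leakage
    {𝒳 𝒴 𝒳₀ 𝒳₁ 𝒴₀ 𝒴₁ : Type*}
    [Fintype 𝒳] [Fintype 𝒴] [Fintype 𝒳₀] [Fintype 𝒳₁] [Fintype 𝒴₀] [Fintype 𝒴₁]
    [DecidableEq 𝒳] [DecidableEq 𝒴] [DecidableEq 𝒳₀] [DecidableEq 𝒳₁]
    [DecidableEq 𝒴₀] [DecidableEq 𝒴₁]
    (P : 𝒳 × 𝒴 → ℝ) (hP0 : ∀ p, 0 ≤ P p) (hP1 : ∑ p, P p = 1)
    (Pt : (𝒳₀ × 𝒳₁) × (𝒴₀ × 𝒴₁) → ℝ) (hPt0 : ∀ p, 0 ≤ Pt p) (hPt1 : ∑ p, Pt p = 1)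
    (δ : ℝ)
    (hδ : 1 - δ ≤
      ∑ q ∈ Finset.univ.filter (fun q : 𝒳₁ × 𝒴₁ =>
        ∃ (eX : 𝒳 ≃ 𝒳₀) (eY : 𝒴 ≃ 𝒴₀), ∀ a b,
          Pt ((eX a, q.1), (eY b, q.2)) /
              (∑ u, ∑ v, Pt ((u, q.1), (v, q.2))) = P (a, b)),
        ∑ u, ∑ v, Pt ((u, q.1), (v, q.2))) :
    primLeakage Pt ≥ (1 - δ) * primLeakage P := by
  have hD := primLeakage_nonneg hP0
  refine le_ciInf fun θ => ?_
  rw [regLeakage_eq_leak hPt0]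
  refine le_trans ?_ (sum_leak_restrict_le (regEmbed Pt θ) Prod.snd Prod.snd)
  refine (mul_le_mul_of_nonneg_right hδ hD).trans ?_
  rw [Finset.sum_mul]
  refine le_trans (Finset.sum_le_sum ?_) (Finset.sum_le_sum_of_subset_of_nonneg
    (Finset.filter_subset _ _) fun _ _ _ => leak_nonneg _)
  intro q hq
  obtain ⟨eX, eY, he⟩ := (Finset.mem_filter.1 hq).2
  set c : ℝ := ∑ u, ∑ v, Pt ((u, q.1), (v, q.2)) with hc
  have hc0 : 0 ≤ c := Finset.sum_nonneg fun u _ => Finset.sum_nonneg fun v _ => hPt0 _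
  rcases hc0.eq_or_lt with hcz | hcp
  · rw [← hcz, zero_mul]
    exact leak_nonneg _
  have hval : ∀ a b, Pt ((eX a, q.1), (eY b, q.2)) = c * P (a, b) := fun a b => by
    rw [← he a b, mul_div_cancel₀ _ hcp.ne']
  rw [leak_extend (eX.toEmbedding.trans (Function.Embedding.sectL 𝒳₀ q.1))
    (eY.toEmbedding.trans (Function.Embedding.sectL 𝒴₀ q.2)) hc0
    (regEmbed P fun p => θ ((eX p.1, q.1), (eY p.2, q.2)))]
  · exact mul_le_mul_of_nonneg_left (primLeakage_le_leak hP0 _) hc0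
  · intro a b
    simp only [Function.Embedding.trans_apply, Equiv.coe_toEmbedding,
      Function.Embedding.sectL_apply, and_self, if_true, regEmbed, hval, Real.sqrt_mul hc0,
      Complex.ofReal_mul]
    ring
  · rintro ⟨u, x⟩ ⟨v, y⟩ h
    refine if_neg ?_
    rintro ⟨rfl, rfl⟩
    rcases h with h | h
    · exact h ⟨eX.symm u, by simp⟩
    · exact h ⟨eY.symm v, by simp⟩

end
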